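/- For all integers p ≥ 1, k ≥ 1 and every i ∈ {1,...,p}, every noncrossing pair partition π of {1,...,2pk} adapted to W_0^k satisfies j_i(π) ≥ 1. -/

import Mathlib

/-- The letter at position `r` (1-based, `1 ≤ r ≤ 2p`) of the word
`W₀ = 1 2 … p p* … 2* 1*`; here `(l, false)` encodes the letter `l` and
`(l, true)` encodes the starred letter `l*`. -/
def letter0 (p r : ℕ) : ℕ × Bool :=
  if r ≤ p then (r, false) else (2 * p + 1 - r, true)

/-- The label of position `m` (1-based) under the periodic word `Wᵢᵏ`, where `Wᵢ`
is the cyclic shift of `W₀` to the right by `i` positions. -/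
def labelW (p i m : ℕ) : ℕ × Bool :=
  letter0 p ((m - 1 + (2 * p - i)) % (2 * p) + 1)

/-- `π` is a noncrossing pair partition of `{1, …, m}`, encoded as the finite set of
its blocks, each block written as an ordered pair `(a, b)` with `a < b`:
all entries lie in `{1, …, m}`, every point of `{1, …, m}` is covered, distinct
blocks are disjoint, and no two blocks cross. -/
def IsNCPP (m : ℕ) (π : Finset (ℕ × ℕ)) : Prop :=
  (∀ b ∈ π, 1 ≤ b.1 ∧ b.2 ≤ m ∧ b.1 < b.2) ∧
  (∀ x, 1 ≤ x → x ≤ m → ∃ b ∈ π, x = b.1 ∨ x = b.2) ∧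
  (∀ b ∈ π, ∀ c ∈ π, (b.1 = c.1 ∨ b.1 = c.2 ∨ b.2 = c.1 ∨ b.2 = c.2) → b = c) ∧
  (∀ b ∈ π, ∀ c ∈ π, ¬(b.1 < c.1 ∧ c.1 < b.2 ∧ b.2 < c.2))

/-- `π ∈ NC²₂ₚₖ(Wᵢᵏ)`: a noncrossing pair partition of `{1, …, 2pk}` each of whose
blocks consists of a position labelled `l` and a position labelled `l*` for some
`l ∈ {1, …, p}` (labels taken from the word `Wᵢᵏ`). -/
def AdaptedNCPP (p i k : ℕ) (π : Finset (ℕ × ℕ)) : Prop :=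
  IsNCPP (2 * p * k) π ∧
  ∀ b ∈ π, ∃ l, 1 ≤ l ∧ l ≤ p ∧
    ((labelW p i b.1 = (l, false) ∧ labelW p i b.2 = (l, true)) ∨
     (labelW p i b.1 = (l, true) ∧ labelW p i b.2 = (l, false)))

/-- The right-leg statistic `jₗ(π) = |R_{l+1}(π)| + |R_{l}*(π)|`: the number of blocks
whose right leg (larger element) is labelled `l+1`, plus the number of blocks whose
right leg is labelled `l*` (the conventions `R₀* = R_{p+1} = ∅` hold automatically,
since those labels never occur). -/
def jstat (p i : ℕ) (π : Finset (ℕ × ℕ)) (l : ℕ) : ℕ :=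
  (π.filter fun b => labelW p i b.2 = (l + 1, false)).card +
  (π.filter fun b => labelW p i b.2 = (l, true)).card

open Classical in
/-- The finset `NC²₂ₚₖ(Wᵢᵏ)` of noncrossing pair partitions of `{1, …, 2pk}`
adapted to `Wᵢᵏ`. -/
noncomputable def NCset (p i k : ℕ) : Finset (Finset (ℕ × ℕ)) :=
  (Finset.Icc 1 (2 * p * k) ×ˢ Finset.Icc 1 (2 * p * k)).powerset.filter
    (AdaptedNCPP p i k)

open Classical in
/-- `Nᵢ(k, (j₀, …, j_p))`: the number of `π ∈ NC²₂ₚₖ(Wᵢᵏ)` with `jₗ(π) = jₗ`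
for all `0 ≤ l ≤ p`. -/
noncomputable def Ncount (p i k : ℕ) (j : Fin (p + 1) → ℕ) : ℕ :=
  ((NCset p i k).filter fun π => ∀ l : Fin (p + 1), jstat p i π (l : ℕ) = j l).card

/-- The generating function `𝒩ᵢ(x, d) = Σ_k (Σ_j Nᵢ(k, j) d^j) x^k ∈ ℝ[[x]]`;
for each `k` only finitely many of the counts `Nᵢ(k, j)` are nonzero, so the inner
`tsum` is a finite sum. -/
noncomputable def genFun (p i : ℕ) (d : Fin (p + 1) → ℝ) : PowerSeries ℝ :=
  PowerSeries.mk fun k =>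
    ∑' j : Fin (p + 1) → ℕ, (Ncount p i k j : ℝ) * ∏ l, d l ^ j l

/-!
In `Wᵢᵏ` the first `i` letters are `i* … 1*` and the last `p - i` letters are `p* … (i+1)*`, all
starred. A block joins a starred to an unstarred position, so its two legs cannot both lie in such
a run: each position of the initial run is a left leg, and each position of the final run is a
right leg. For `l < i`, the block starting at the initial `(l+1)*` has right leg `l + 1`; for
`l > i`, the final `l*` is itself a right leg. Either way `jₗ ≥ 1`, so only `jᵢ` can vanish.
-/

theorem letter0_two_mul_sub_add_one {p l : ℕ} (hlp : l ≤ p) :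
    letter0 p (2 * p - l + 1) = (l, true) := by
  rw [letter0, if_neg (by omega), show 2 * p + 1 - (2 * p - l + 1) = l by omega]

-- The case `q = 0` is the initial starred run of `Wᵢᵏ`, the case `q = k` its final one.
theorem labelW_eq_starred {p i l q x : ℕ} (hi : i ≤ 2 * p) (hl : 1 ≤ l) (hlp : l ≤ p)
    (hx₁ : 1 ≤ x) (hx : x + l = 2 * p * q + i + 1) : labelW p i x = (l, true) := by
  have hoffset : x - 1 + (2 * p - i) = 2 * p - l + 2 * p * q := by omega
  rw [labelW, hoffset, Nat.add_mul_mod_self_left, Nat.mod_eq_of_lt (by omega),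
    letter0_two_mul_sub_add_one hlp]

theorem one_le_jstat_of_mem {p i l : ℕ} {π : Finset (ℕ × ℕ)} {b : ℕ × ℕ} (hb : b ∈ π)
    (hlabel : labelW p i b.2 = (l + 1, false) ∨ labelW p i b.2 = (l, true)) :
    1 ≤ jstat p i π l := by
  rcases hlabel with hlabel | hlabel
  · exact Nat.le_add_right_of_le
      (Finset.one_le_card.mpr ⟨b, Finset.mem_filter.mpr ⟨hb, hlabel⟩⟩)
  · exact Nat.le_add_left_of_le
      (Finset.one_le_card.mpr ⟨b, Finset.mem_filter.mpr ⟨hb, hlabel⟩⟩)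

/-- A cover of `{1, …, m}` by two-element blocks joining dual letters `l` and `l*` of the word
`label`, with blocks encoded as in `IsNCPP`. Unlike in `AdaptedNCPP`, blocks may cross
and overlap. -/
structure IsDualPairCover (m : ℕ) (label : ℕ → ℕ × Bool) (π : Finset (ℕ × ℕ)) : Prop where
  one_le_fst : ∀ b ∈ π, 1 ≤ b.1
  snd_le : ∀ b ∈ π, b.2 ≤ m
  fst_lt_snd : ∀ b ∈ π, b.1 < b.2
  exists_leg_eq : ∀ x, 1 ≤ x → x ≤ m → ∃ b ∈ π, x = b.1 ∨ x = b.2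
  label_snd : ∀ b ∈ π, label b.2 = ((label b.1).1, !(label b.1).2)

theorem AdaptedNCPP.isDualPairCover {p i k : ℕ} {π : Finset (ℕ × ℕ)} (hπ : AdaptedNCPP p i k π) :
    IsDualPairCover (2 * p * k) (labelW p i) π := by
  obtain ⟨⟨hbounds, hcover, -, -⟩, hlabel⟩ := hπ
  refine ⟨fun b hb => (hbounds b hb).1, fun b hb => (hbounds b hb).2.1,
    fun b hb => (hbounds b hb).2.2, hcover, fun b hb => ?_⟩
  obtain ⟨l, -, -, ⟨hfst, hsnd⟩ | ⟨hfst, hsnd⟩⟩ := hlabel b hb <;>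
    rw [hfst, hsnd] <;> rfl

namespace IsDualPairCover

variable {m x : ℕ} {label : ℕ → ℕ × Bool} {π : Finset (ℕ × ℕ)}

theorem star_fst_ne_star_snd (hπ : IsDualPairCover m label π) {b : ℕ × ℕ} (hb : b ∈ π) :
    (label b.1).2 ≠ (label b.2).2 := by
  rw [hπ.label_snd b hb]
  exact (Bool.not_ne_self _).symm

theorem exists_fst_eq_of_initial_run (hπ : IsDualPairCover m label π) (hx₁ : 1 ≤ x) (hxm : x ≤ m)
    (hrun : ∀ y, 1 ≤ y → y < x → (label y).2 = (label x).2) : ∃ b ∈ π, b.1 = x := by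
  obtain ⟨b, hb, rfl | rfl⟩ := hπ.exists_leg_eq x hx₁ hxm
  · exact ⟨b, hb, rfl⟩
  · exact absurd (hrun b.1 (hπ.one_le_fst b hb) (hπ.fst_lt_snd b hb))
      (hπ.star_fst_ne_star_snd hb)

theorem exists_snd_eq_of_final_run (hπ : IsDualPairCover m label π) (hx₁ : 1 ≤ x) (hxm : x ≤ m)
    (hrun : ∀ y, x < y → y ≤ m → (label y).2 = (label x).2) : ∃ b ∈ π, b.2 = x := by
  obtain ⟨b, hb, rfl | rfl⟩ := hπ.exists_leg_eq x hx₁ hxm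
  · exact absurd (hrun b.2 (hπ.fst_lt_snd b hb) (hπ.snd_le b hb)).symm
      (hπ.star_fst_ne_star_snd hb)
  · exact ⟨b, hb, rfl⟩

variable {p i k l : ℕ}

theorem exists_right_leg_unstarred (hπ : IsDualPairCover (2 * p * k) (labelW p i) π)
    (hk : 1 ≤ k) (hip : i ≤ p) (hl : 1 ≤ l) (hli : l ≤ i) :
    ∃ b ∈ π, labelW p i b.2 = (l, false) := by
  have hlength : 2 * p ≤ 2 * p * k := Nat.le_mul_of_pos_right _ hk
  have hstarred (y : ℕ) (hy₁ : 1 ≤ y) (hyi : y ≤ i) : labelW p i y = (i + 1 - y, true) :=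
    labelW_eq_starred (q := 0) (by omega) (by omega) (by omega) hy₁ (by omega)
  have hx : labelW p i (i + 1 - l) = (l, true) := by
    rw [hstarred _ (by omega) (by omega), Nat.sub_sub_self (by omega)]
  obtain ⟨b, hb, hbx⟩ := hπ.exists_fst_eq_of_initial_run (x := i + 1 - l) (by omega) (by omega)
    fun y hy₁ hyx => by rw [hstarred y hy₁ (by omega), hx]
  exact ⟨b, hb, by rw [hπ.label_snd b hb, hbx, hx]; rfl⟩

theorem exists_right_leg_starred (hπ : IsDualPairCover (2 * p * k) (labelW p i) π)
    (hk : 1 ≤ k) (hil : i < l) (hlp : l ≤ p) :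
    ∃ b ∈ π, labelW p i b.2 = (l, true) := by
  have hlength : 2 * p ≤ 2 * p * k := Nat.le_mul_of_pos_right _ hk
  have hstarred (y : ℕ) (hy : 2 * p * k + i + 1 - l ≤ y) (hyk : y ≤ 2 * p * k) :
      labelW p i y = (2 * p * k + i + 1 - y, true) :=
    labelW_eq_starred (q := k) (by omega) (by omega) (by omega) (by omega) (by omega)
  have hx : labelW p i (2 * p * k + i + 1 - l) = (l, true) := by
    rw [hstarred _ le_rfl (by omega), Nat.sub_sub_self (by omega)]
  obtain ⟨b, hb, hbx⟩ := hπ.exists_snd_eq_of_final_run (x := 2 * p * k + i + 1 - l)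
    (by omega) (by omega) fun y hxy hyk => by rw [hstarred y hxy.le hyk, hx]
  exact ⟨b, hb, hbx ▸ hx⟩

end IsDualPairCover

theorem jstat_pos_general {p i k l : ℕ} (hk : 1 ≤ k) (hip : i ≤ p) (hlp : l ≤ p) (hli : l ≠ i)
    {π : Finset (ℕ × ℕ)} (hπ : IsDualPairCover (2 * p * k) (labelW p i) π) :
    1 ≤ jstat p i π l := by
  rcases hli.lt_or_gt with hlt | hgt
  · obtain ⟨b, hb, hlabel⟩ := hπ.exists_right_leg_unstarred hk hip l.succ_pos hlt
    exact one_le_jstat_of_mem hb (.inl hlabel)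
  · obtain ⟨b, hb, hlabel⟩ := hπ.exists_right_leg_starred hk hgt hlp
    exact one_le_jstat_of_mem hb (.inr hlabel)

/-- For `p, k ≥ 1` and `i ∈ {1, …, p}`, every noncrossing pair partition of
`{1, …, 2pk}` adapted to `W₀ᵏ` satisfies `jᵢ(π) ≥ 1`. -/
theorem jstat_pos (p k i : ℕ) (hp : 1 ≤ p) (hk : 1 ≤ k)
    (hi1 : 1 ≤ i) (hip : i ≤ p) (π : Finset (ℕ × ℕ))
    (hπ : AdaptedNCPP p 0 k π) :
    1 ≤ jstat p 0 π i :=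
  jstat_pos_general hk (Nat.zero_le p) hip (Nat.ne_of_gt hi1) hπ.isDualPairCover
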